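/- For every ε > 0 there exists a nonzero smooth compactly supported function ξ: (0,∞) → ℝ such that (1/(4+ε)) ∫₀^∞ ξ'(ρ)²/ρ³ dρ < ∫₀^∞ ξ(ρ)²/ρ⁵ dρ. In other words, the constant 1/4 in the Hardy-type inequality ∫ ξ²/ρ⁵ ≤ C ∫ (ξ')²/ρ³ is optimal. -/

import Mathlib

open Real MeasureTheory Set

theorem hardy_aux_identity (φ : ℝ → ℝ) (hφ : ContDiff ℝ (⊤ : ℕ∞) φ) (hc : HasCompactSupport φ)
    (δ : ℝ) :
    ∫ t, (2 * φ t + δ * deriv φ t) ^ 2 = 4 * (∫ t, φ t ^ 2) + δ ^ 2 * ∫ t, deriv φ t ^ 2 := by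
  have hcont : Continuous φ := hφ.continuous
  have hdiff : Differentiable ℝ φ := hφ.differentiable (by simp)
  have hdc : Continuous (deriv φ) := hφ.continuous_deriv (by exact_mod_cast le_top)
  have i1 : Integrable (fun t => φ t ^ 2) := by
    have h := (hcont.mul hcont).integrable_of_hasCompactSupport (μ := volume) (hc.mul_right)
    refine h.congr (Filter.Eventually.of_forall fun t => ?_)
    simp [pow_two]
  have i2 : Integrable (fun t => deriv φ t ^ 2) := by
    have h := (hdc.mul hdc).integrable_of_hasCompactSupport (μ := volume) (hc.deriv.mul_right)
    refine h.congr (Filter.Eventually.of_forall fun t => ?_)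
    simp [pow_two]
  have i3 : Integrable (fun t => 2 * φ t * deriv φ t) := by
    have h := ((hcont.mul hdc).integrable_of_hasCompactSupport (μ := volume)
      (hc.mul_right)).const_mul 2
    refine h.congr (Filter.Eventually.of_forall fun t => ?_)
    simp [mul_assoc]
  have h0 : ∫ t, 2 * φ t * deriv φ t = 0 := by
    refine integral_eq_zero_of_hasDerivAt_of_integrable (f := fun t => φ t ^ 2) ?_ i3 i1
    intro t
    have h1 := (hdiff t).hasDerivAt.fun_pow 2
    have h2 : ((2 : ℕ) : ℝ) * φ t ^ (2 - 1) * deriv φ t = 2 * φ t * deriv φ t := by simp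
    rw [h2] at h1
    exact h1
  have e : (fun t => (2 * φ t + δ * deriv φ t) ^ 2) =
      fun t => (4 * φ t ^ 2 + 2 * δ * (2 * φ t * deriv φ t)) + δ ^ 2 * deriv φ t ^ 2 := by
    funext t; ring
  have i4 : Integrable (fun t => 4 * φ t ^ 2 + 2 * δ * (2 * φ t * deriv φ t)) :=
    (i1.const_mul _).add (i3.const_mul _)
  rw [e, integral_add i4 (i2.const_mul _),
    integral_add (i1.const_mul _) (i3.const_mul _), integral_const_mul, integral_const_mul,
    integral_const_mul, h0]
  ring

theorem hardy_aux_cov (f : ℝ → ℝ) :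
    ∫ ρ in Set.Ioi (0:ℝ), f ρ = ∫ t, exp t * f (exp t) := by
  have h := integral_image_eq_integral_abs_deriv_smul (s := univ) (f := exp) (f' := exp)
    MeasurableSet.univ (fun x _ => (Real.hasDerivAt_exp x).hasDerivWithinAt)
    Real.exp_injective.injOn f
  rw [image_univ, Real.range_exp] at h
  rw [h]
  simp [abs_of_pos (exp_pos _)]

theorem hardy_constant_optimal :
    ∀ ε > (0:ℝ), ∃ ξ : ℝ → ℝ,
      ContDiff ℝ (⊤ : ℕ∞) ξ ∧ HasCompactSupport ξ ∧ tsupport ξ ⊆ Set.Ioi 0 ∧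
      ξ ≠ 0 ∧
      (1 / (4 + ε)) * ∫ ρ in Set.Ioi (0:ℝ), (deriv ξ ρ) ^ 2 / ρ ^ 3
        < ∫ ρ in Set.Ioi (0:ℝ), (ξ ρ) ^ 2 / ρ ^ 5 := by
  intro ε hε
  let b : ContDiffBump (0:ℝ) := ⟨1, 2, by norm_num, by norm_num⟩
  obtain ⟨φ, hφ, hc, hφ0, hφz⟩ : ∃ φ : ℝ → ℝ, ContDiff ℝ (⊤ : ℕ∞) φ ∧ HasCompactSupport φ ∧
      φ 0 = 1 ∧ ∀ t, 2 ≤ |t| → φ t = 0 := by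
    refine ⟨b, b.contDiff, b.hasCompactSupport, ?_, ?_⟩
    · exact b.one_of_mem_closedBall (by simp [b])
    · intro t ht
      exact b.zero_of_le_dist (by simpa [b, Real.dist_eq] using ht)
  have hcont : Continuous φ := hφ.continuous
  have hdiff : Differentiable ℝ φ := hφ.differentiable (by simp)
  set A := ∫ t, φ t ^ 2 with hA
  set B := ∫ t, deriv φ t ^ 2 with hB
  have hApos : 0 < A := by
    refine Continuous.integral_pos_of_hasCompactSupport_nonneg_nonzero (x := 0)
      (hcont.pow 2) ?_ (fun t => sq_nonneg _) (by simp [hφ0])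
    have h : HasCompactSupport (φ * φ) := hc.mul_right
    have h2 : (fun t => φ t ^ 2) = φ * φ := by
      funext t; simp [pow_two]
    rw [h2]
    exact h
  have hB0 : 0 ≤ B := integral_nonneg fun t => sq_nonneg _
  obtain ⟨δ, hδ, hδB⟩ : ∃ δ > 0, δ ^ 2 * B < ε * A := by
    refine ⟨sqrt (ε * A / (B + 1)), by positivity, ?_⟩
    rw [Real.sq_sqrt (by positivity), div_mul_eq_mul_div, div_lt_iff₀ (by positivity)]
    have : 0 < ε * A := by positivity
    nlinarith
  let ξ : ℝ → ℝ := fun ρ => if 0 < ρ then ρ ^ 2 * φ (δ * log ρ) else 0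
  have hξpos : ∀ ρ, 0 < ρ → ξ ρ = ρ ^ 2 * φ (δ * log ρ) := fun ρ h => if_pos h
  have hξev : ∀ ρ, 0 < ρ → ξ =ᶠ[nhds ρ] fun ρ => ρ ^ 2 * φ (δ * log ρ) := fun ρ h => by
    filter_upwards [Ioi_mem_nhds h] with x hx using hξpos x hx
  have hsupp : ∀ ρ, ρ ∉ Icc (exp (-(2/δ))) (exp (2/δ)) → ξ ρ = 0 := by
    intro ρ hρ
    by_cases h : 0 < ρ
    · rw [hξpos ρ h, hφz, mul_zero]
      by_contra! hlt
      apply hρ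
      rw [abs_mul, abs_of_pos hδ, mul_comm, ← lt_div_iff₀ hδ, abs_lt] at hlt
      exact ⟨((Real.lt_log_iff_exp_lt h).1 hlt.1).le, ((Real.log_lt_iff_lt_exp h).1 hlt.2).le⟩
    · exact if_neg h
  have hts : tsupport ξ ⊆ Icc (exp (-(2/δ))) (exp (2/δ)) := by
    refine closure_minimal ?_ isClosed_Icc
    intro ρ hρ
    by_contra h
    exact hρ (hsupp ρ h)
  have hder : ∀ ρ, 0 < ρ →
      deriv ξ ρ = ρ * (2 * φ (δ * log ρ) + δ * deriv φ (δ * log ρ)) := by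
    intro ρ h
    rw [(hξev ρ h).deriv_eq]
    have h1 : HasDerivAt (fun ρ => δ * log ρ) (δ * ρ⁻¹) ρ :=
      (Real.hasDerivAt_log h.ne').const_mul δ
    have h2 : HasDerivAt (fun ρ => φ (δ * log ρ)) (deriv φ (δ * log ρ) * (δ * ρ⁻¹)) ρ :=
      (hdiff (δ * log ρ)).hasDerivAt.comp ρ h1
    have h3 := (hasDerivAt_pow 2 ρ).mul h2
    refine (HasDerivAt.deriv h3).trans ?_
    field_simp
    push_cast
    ring
  refine ⟨ξ, ?_, ?_, ?_, ?_, ?_⟩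
  · rw [contDiff_iff_contDiffAt]
    intro ρ
    by_cases h : 0 < ρ
    · refine ContDiffAt.congr_of_eventuallyEq ?_ (hξev ρ h)
      refine (contDiffAt_id.pow 2).mul (hφ.contDiffAt.comp ρ ?_)
      exact contDiffAt_const.mul (Real.contDiffAt_log.2 h.ne')
    · have : ξ =ᶠ[nhds ρ] fun _ => 0 := by
        filter_upwards [Iio_mem_nhds (lt_of_le_of_lt (not_lt.1 h) (exp_pos (-(2/δ))))] with x hx
        exact hsupp x fun h' => absurd h'.1 (not_le.2 hx)
      exact contDiffAt_const.congr_of_eventuallyEq this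
  · exact isCompact_Icc.of_isClosed_subset (isClosed_tsupport ξ) hts
  · intro ρ hρ
    exact (exp_pos _).trans_le (hts hρ).1
  · intro h
    have := congrFun h 1
    rw [hξpos 1 one_pos] at this
    simp [hφ0] at this
  · rw [hardy_aux_cov, hardy_aux_cov]
    have e1 : ∀ t, exp t * ((deriv ξ (exp t)) ^ 2 / exp t ^ 3) =
        (fun s => (2 * φ s + δ * deriv φ s) ^ 2) (δ * t) := by
      intro t
      have := exp_pos t
      rw [hder _ this, Real.log_exp]
      field_simp
    have e2 : ∀ t, exp t * ((ξ (exp t)) ^ 2 / exp t ^ 5) = (fun s => φ s ^ 2) (δ * t) := by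
      intro t
      have := exp_pos t
      rw [hξpos _ this, Real.log_exp]
      field_simp
    simp_rw [e1, e2]
    rw [Measure.integral_comp_mul_left (fun s => (2 * φ s + δ * deriv φ s) ^ 2),
      Measure.integral_comp_mul_left (fun s => φ s ^ 2), hardy_aux_identity φ hφ hc δ,
      ← hA, ← hB, abs_of_pos (by positivity), smul_eq_mul, smul_eq_mul, mul_left_comm]
    refine mul_lt_mul_of_pos_left ?_ (by positivity)
    rw [one_div, inv_mul_lt_iff₀ (by positivity)]
    linarith
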